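/- Fix ρ ∈ (0,1) and α ∈ (0,1). For each n ≥ 1 set α_n = α/n, let c_n be defined by Φ(−c_n) = α_n, and set FWER_n(ρ) = 1 − H_n(ρ, c_n). Then limsup_{n→∞} FWER_n(ρ) ≤ α·(1−ρ). -/

import Mathlib

open MeasureTheory Filter

/-- The standard normal density. -/
noncomputable def phi (x : ℝ) : ℝ := (Real.sqrt (2 * Real.pi))⁻¹ * Real.exp (-x ^ 2 / 2)

/-- The standard normal cumulative distribution function. -/
noncomputable def Phi (x : ℝ) : ℝ := ∫ t in Set.Iic x, phi t

/-- d(ρ,c,z) = (c + √ρ·z)/√(1−ρ). -/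
noncomputable def dd (ρ c z : ℝ) : ℝ := (c + Real.sqrt ρ * z) / Real.sqrt (1 - ρ)

/-- G(ρ,c,z) = (c + z/√ρ)/(2(1−ρ)^{3/2}). -/
noncomputable def G (ρ c z : ℝ) : ℝ :=
  (c + z / Real.sqrt ρ) / (2 * (1 - ρ) ^ ((3 : ℝ) / 2))

/-- H_n(ρ,c) = ∫ Φ(d(ρ,c,z))^n φ(z) dz. -/
noncomputable def Hn (n : ℕ) (ρ c : ℝ) : ℝ := ∫ z : ℝ, (Phi (dd ρ c z)) ^ n * phi z

lemma phi_eq_gauss : phi = ProbabilityTheory.gaussianPDFReal 0 1 := by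
  funext x
  simp [phi, ProbabilityTheory.gaussianPDFReal]

lemma phi_integrable : Integrable phi := by
  rw [phi_eq_gauss]; exact ProbabilityTheory.integrable_gaussianPDFReal 0 1

lemma phi_integral : ∫ x, phi x = 1 := by
  rw [phi_eq_gauss]; exact ProbabilityTheory.integral_gaussianPDFReal_eq_one 0 one_ne_zero

lemma phi_pos (x : ℝ) : 0 < phi x := by
  unfold phi; positivity

lemma Phi_nonneg (x : ℝ) : 0 ≤ Phi x :=
  integral_nonneg (fun t => (phi_pos t).le)

lemma Phi_mono : Monotone Phi := by
  intro a b h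
  exact setIntegral_mono_set phi_integrable.integrableOn
    (Eventually.of_forall (fun t => (phi_pos t).le)) (Set.Iic_subset_Iic.2 h).eventuallyLE

lemma Phi_add_neg (x : ℝ) : Phi x + Phi (-x) = 1 := by
  have h1 : Phi (-x) = ∫ t in Set.Ioi x, phi t := by
    have := integral_comp_neg_Iic (-x) phi
    rw [neg_neg] at this
    rw [← this]
    unfold Phi
    congr 1
    funext t
    simp [phi]
  rw [h1, ← phi_integral, ← Set.compl_Iic]
  exact integral_add_compl measurableSet_Iic phi_integrable

lemma Phi_le_one (x : ℝ) : Phi x ≤ 1 := by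
  have := Phi_add_neg x
  have := Phi_nonneg (-x)
  linarith

lemma Phi_upper (d : ℝ) (hd : 0 ≤ d) : Phi (-d) ≤ Real.exp (-d ^ 2 / 2) := by
  have hi : Integrable (fun t => Real.exp (-d ^ 2 / 2) * phi (t + d)) :=
    (phi_integrable.comp_add_right d).const_mul _
  calc Phi (-d) ≤ ∫ t in Set.Iic (-d), Real.exp (-d ^ 2 / 2) * phi (t + d) := by
        refine setIntegral_mono_on phi_integrable.integrableOn hi.integrableOn
          measurableSet_Iic ?_
        intro t ht
        have ht : t ≤ -d := ht
        unfold phi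
        rw [mul_left_comm, ← Real.exp_add]
        gcongr
        nlinarith
    _ ≤ ∫ t, Real.exp (-d ^ 2 / 2) * phi (t + d) :=
        setIntegral_le_integral hi (Eventually.of_forall
          (fun t => mul_nonneg (Real.exp_pos _).le (phi_pos _).le))
    _ = Real.exp (-d ^ 2 / 2) := by
        rw [integral_const_mul, integral_add_right_eq_self phi d, phi_integral, mul_one]

lemma Phi_lower (c : ℝ) (hc : 0 ≤ c) : phi (c + 1) ≤ Phi (-c) := by
  calc phi (c + 1) = ∫ _t in Set.Icc (-c - 1) (-c), phi (c + 1) := by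
        simp
    _ ≤ ∫ t in Set.Icc (-c - 1) (-c), phi t := by
        refine setIntegral_mono_on (by simp) phi_integrable.integrableOn measurableSet_Icc ?_
        intro t ht
        obtain ⟨h1, h2⟩ := ht
        unfold phi
        gcongr 2
        nlinarith
    _ ≤ Phi (-c) :=
        setIntegral_mono_set phi_integrable.integrableOn
          (Eventually.of_forall (fun t => (phi_pos t).le)) Set.Icc_subset_Iic_self.eventuallyLE

lemma Phi_pos' (x : ℝ) : 0 < Phi x := by
  have h := Phi_lower |x| (abs_nonneg x)
  have h2 : Phi (-|x|) ≤ Phi x := Phi_mono (neg_abs_le x)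
  linarith [phi_pos (|x| + 1)]

lemma c_tendsto (α : ℝ) (c : ℕ → ℝ) (hc : ∀ n : ℕ, 1 ≤ n → Phi (-(c n)) = α / n) :
    Tendsto c atTop atTop := by
  rw [tendsto_atTop]
  intro M
  have h := (tendsto_const_div_atTop_nhds_zero_nat α).eventually_lt_const (Phi_pos' (-M))
  filter_upwards [h, eventually_ge_atTop 1] with n hn h1
  rw [← hc n h1] at hn
  have := Phi_mono.reflect_lt hn
  linarith

lemma expo_tendsto (ρ z : ℝ) (hρ : ρ ∈ Set.Ioo (0:ℝ) 1) :
    Tendsto (fun c : ℝ => (c + 1) ^ 2 / 2 - (dd ρ c z) ^ 2 / 2) atTop atBot := by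
  obtain ⟨h0, h1⟩ := hρ
  have h1' : 0 < 1 - ρ := by linarith
  have key : (fun c : ℝ => (c + 1) ^ 2 / 2 - (dd ρ c z) ^ 2 / 2) =
      fun c => c * ((-(ρ / (1 - ρ) / 2)) * c + (1 - Real.sqrt ρ * z / (1 - ρ)))
        + (1 / 2 - ρ * z ^ 2 / (1 - ρ) / 2) := by
    funext c
    unfold dd
    rw [div_pow, Real.sq_sqrt h1'.le, add_sq c (Real.sqrt ρ * z), mul_pow, Real.sq_sqrt h0.le]
    field_simp
    ring
  rw [key]
  apply tendsto_atBot_add_const_right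
  apply Tendsto.atTop_mul_atBot₀ tendsto_id
  apply tendsto_atBot_add_const_right
  have : -(ρ / (1 - ρ) / 2) < 0 := by
    have : 0 < ρ / (1 - ρ) / 2 := by positivity
    linarith
  exact tendsto_id.const_mul_atTop_of_neg this

lemma pow_tendsto (ρ z : ℝ) (hρ : ρ ∈ Set.Ioo (0:ℝ) 1) (α : ℝ)
    (c : ℕ → ℝ) (hc : ∀ n : ℕ, 1 ≤ n → Phi (-(c n)) = α / n) :
    Tendsto (fun n : ℕ => Phi (dd ρ (c n) z) ^ n) atTop (nhds 1) := by
  have hct := c_tendsto α c hc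
  have h1' : 0 < 1 - ρ := by linarith [hρ.2]
  have hE : Tendsto (fun n : ℕ => 1 - α * Real.sqrt (2 * Real.pi) *
      Real.exp ((c n + 1) ^ 2 / 2 - (dd ρ (c n) z) ^ 2 / 2)) atTop (nhds 1) := by
    have := ((Real.tendsto_exp_atBot.comp ((expo_tendsto ρ z hρ).comp hct)).const_mul
      (α * Real.sqrt (2 * Real.pi))).const_sub 1
    simpa using this
  refine tendsto_of_tendsto_of_tendsto_of_le_of_le' hE tendsto_const_nhds ?_
    (Eventually.of_forall fun n => pow_le_one₀ (Phi_nonneg _) (Phi_le_one _))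
  filter_upwards [hct.eventually_ge_atTop 0, hct.eventually_ge_atTop (-(Real.sqrt ρ * z)),
    eventually_ge_atTop 1] with n h0 hz hn
  set d := dd ρ (c n) z with hd
  have hd0 : 0 ≤ d := by
    rw [hd]; unfold dd
    apply div_nonneg _ (Real.sqrt_nonneg _)
    linarith
  have hnpos : (0:ℝ) < n := by exact_mod_cast hn
  have hB : 1 - n * Phi (-d) ≤ Phi d ^ n := by
    have hp := Phi_add_neg d
    have h2 : -2 ≤ -Phi (-d) := by linarith [Phi_le_one (-d)]
    have := one_add_mul_le_pow h2 n
    have h3 : 1 + -Phi (-d) = Phi d := by linarith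
    rw [h3] at this
    linarith
  have hα : (n:ℝ) * phi (c n + 1) ≤ α := by
    have h := Phi_lower (c n) h0
    rw [hc n hn, le_div_iff₀ hnpos] at h
    linarith
  have hN : (n:ℝ) ≤ α * Real.sqrt (2 * Real.pi) * Real.exp ((c n + 1) ^ 2 / 2) := by
    have hs : 0 < Real.sqrt (2 * Real.pi) := by positivity
    have := mul_le_mul_of_nonneg_right hα
      (mul_pos hs (Real.exp_pos ((c n + 1) ^ 2 / 2))).le
    have e : (n:ℝ) * phi (c n + 1) * (Real.sqrt (2 * Real.pi) * Real.exp ((c n + 1) ^ 2 / 2))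
        = n := by
      unfold phi
      rw [neg_div, Real.exp_neg]
      field_simp
    rw [e] at this
    linarith
  have hU := Phi_upper d hd0
  have : (n:ℝ) * Phi (-d) ≤ α * Real.sqrt (2 * Real.pi) *
      Real.exp ((c n + 1) ^ 2 / 2 - d ^ 2 / 2) := by
    rw [sub_eq_add_neg, Real.exp_add, ← mul_assoc, ← neg_div]
    exact mul_le_mul hN hU (Phi_nonneg _) (hnpos.le.trans hN)
  linarith

theorem limsup_FWER_bonferroni_le
    (ρ : ℝ) (hρ : ρ ∈ Set.Ioo (0:ℝ) 1) (α : ℝ) (hα : α ∈ Set.Ioo (0:ℝ) 1)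
    (c : ℕ → ℝ) (hc : ∀ n : ℕ, 1 ≤ n → Phi (-(c n)) = α / n) :
    limsup (fun n : ℕ => 1 - Hn n ρ (c n)) atTop ≤ α * (1 - ρ) := by
  have hH : Tendsto (fun n : ℕ => Hn n ρ (c n)) atTop (nhds (∫ z, phi z)) := by
    unfold Hn
    refine tendsto_integral_of_dominated_convergence phi ?_ phi_integrable ?_ ?_
    · intro n
      have hm : Measurable (fun z => Phi (dd ρ (c n) z)) := by
        apply Phi_mono.measurable.comp
        unfold dd
        fun_prop
      exact (hm.pow_const n).aestronglyMeasurable.mul phi_integrable.aestronglyMeasurable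
    · intro n
      refine Eventually.of_forall fun z => ?_
      rw [Real.norm_of_nonneg (mul_nonneg (pow_nonneg (Phi_nonneg _) _) (phi_pos _).le)]
      exact mul_le_of_le_one_left (phi_pos z).le (pow_le_one₀ (Phi_nonneg _) (Phi_le_one _))
    · refine Eventually.of_forall fun z => ?_
      simpa using (pow_tendsto ρ z hρ α c hc).mul_const (phi z)
  have h := hH.const_sub 1
  rw [phi_integral, sub_self] at h
  rw [h.limsup_eq]
  exact mul_nonneg hα.1.le (by linarith [hρ.2])
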